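/- The spectral gap satisfies λ^G_{π,ν} ≥ max_{0 ≤ i ≤ n} min{ (Σ_{j=0}^{i−1} π([0,j])/ν(j,j+1))^{−1}, (Σ_{j=i+1}^{n} π([j,n])/ν(j−1,j))^{−1} }, where π([a,b]) = Σ_{k=a}^{b} π(k), empty sums are 0, and the reciprocal of 0 is interpreted as +∞ (i.e. for i = 0 only the second term constrains, and for i = n only the first). -/

import Mathlib

open Finset

/-- Dirichlet form on the path with vertices `{0,1,…,n}`;
`ν i` denotes the weight of edge `{i, i+1}` for `0 ≤ i ≤ n−1`. -/
noncomputable def EForm (n : ℕ) (ν : ℕ → ℝ) (f g : ℕ → ℝ) : ℝ :=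
  ∑ i ∈ Finset.range n, (f i - f (i + 1)) * (g i - g (i + 1)) * ν i

/-- Mean of `f` with respect to `π` on `{0,…,n}`. -/
noncomputable def piMean (n : ℕ) (π : ℕ → ℝ) (f : ℕ → ℝ) : ℝ :=
  ∑ i ∈ Finset.range (n + 1), f i * π i

/-- Variance of `f` with respect to `π` on `{0,…,n}`. -/
noncomputable def varPi (n : ℕ) (π : ℕ → ℝ) (f : ℕ → ℝ) : ℝ :=
  piMean n π (fun i => (f i) ^ 2) - (piMean n π f) ^ 2

/-- `f` is non-constant on `{0,…,n}`. -/
def Nonconstant (n : ℕ) (f : ℕ → ℝ) : Prop :=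
  ∃ i ∈ Finset.range (n + 1), ∃ j ∈ Finset.range (n + 1), f i ≠ f j

/-- `lam` is the spectral gap: the minimum of the Rayleigh quotients over
non-constant functions on `{0,…,n}`. -/
def IsSpectralGap (n : ℕ) (π ν : ℕ → ℝ) (lam : ℝ) : Prop :=
  IsLeast {r : ℝ | ∃ f : ℕ → ℝ, Nonconstant n f ∧ r = EForm n ν f f / varPi n π f} lam

/-! The variance is at most the second moment of `f` about `f i`, for any vertex `i`. Write
`f k - f i` as the sum of the increments of `f` along the path from `k` to `i` and apply
Cauchy–Schwarz with the weights `ν`: exchanging the order of summation, the factor `1 / ν e` of an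
edge `e` collects the mass of all vertices whose path to `i` crosses `e`. The paths from the left
of `i` use only the edges below `i` and those from the right only the edges above it, so each side
is compared with its own share of the Dirichlet form. -/

lemma min_inv_inv_le_inv_max {α : Type*} [LinearOrder α] [Inv α] (a b : α) :
    min a⁻¹ b⁻¹ ≤ (max a b)⁻¹ := by
  rcases max_choice a b with hab | hab <;> simp [hab]

section Congestion

variable {ι κ K : Type*}

lemma sum_sum_inv_mul_eq_sum_sum_filter_div [DecidableEq ι] [Semifield K] {s : Finset κ}
    {t : Finset ι} {P : κ → Finset ι} (hP : ∀ k ∈ s, P k ⊆ t) (w : κ → K) (ν : ι → K) :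
    ∑ k ∈ s, (∑ e ∈ P k, (ν e)⁻¹) * w k = ∑ e ∈ t, (∑ k ∈ s with e ∈ P k, w k) / ν e := by
  simp only [sum_div, sum_mul, inv_mul_eq_div]
  refine sum_comm' fun k e => ?_
  rw [mem_filter]
  exact ⟨fun ⟨hk, he⟩ => ⟨⟨hk, he⟩, hP k hk he⟩, fun ⟨hke, _⟩ => hke⟩

variable [Field K] [LinearOrder K] [IsStrictOrderedRing K]

lemma sq_sum_le_sum_inv_mul_sum {s t : Finset ι} {ν : ι → K} (hst : s ⊆ t)
    (hν : ∀ e ∈ t, 0 < ν e) (d : ι → K) :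
    (∑ e ∈ s, d e) ^ 2 ≤ (∑ e ∈ s, (ν e)⁻¹) * ∑ e ∈ t, d e ^ 2 * ν e := by
  have hinv : ∀ e ∈ s, 0 ≤ (ν e)⁻¹ := fun e he => inv_nonneg.2 (hν e (hst he)).le
  have henergy : ∀ e ∈ t, 0 ≤ d e ^ 2 * ν e := fun e he =>
    mul_nonneg (sq_nonneg _) (hν e he).le
  calc (∑ e ∈ s, d e) ^ 2
      ≤ (∑ e ∈ s, (ν e)⁻¹) * ∑ e ∈ s, d e ^ 2 * ν e :=
        sum_sq_le_sum_mul_sum_of_sq_le_mul _ hinv (fun e he => henergy e (hst he)) fun e he => by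
          rw [mul_comm, mul_inv_cancel_right₀ (hν e (hst he)).ne']
    _ ≤ (∑ e ∈ s, (ν e)⁻¹) * ∑ e ∈ t, d e ^ 2 * ν e :=
        mul_le_mul_of_nonneg_left
          (sum_le_sum_of_subset_of_nonneg hst fun e he _ => henergy e he) (sum_nonneg hinv)

lemma sum_sq_sum_mul_le [DecidableEq ι] {s : Finset κ} {t : Finset ι} {P : κ → Finset ι}
    {w : κ → K} {ν : ι → K} (hP : ∀ k ∈ s, P k ⊆ t) (hw : ∀ k ∈ s, 0 ≤ w k) (hν : ∀ e ∈ t, 0 < ν e)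
    (d : ι → K) :
    ∑ k ∈ s, (∑ e ∈ P k, d e) ^ 2 * w k ≤
      (∑ e ∈ t, (∑ k ∈ s with e ∈ P k, w k) / ν e) * ∑ e ∈ t, d e ^ 2 * ν e := by
  rw [← sum_sum_inv_mul_eq_sum_sum_filter_div hP, sum_mul]
  refine sum_le_sum fun k hk => ?_
  rw [mul_right_comm]
  exact mul_le_mul_of_nonneg_right (sq_sum_le_sum_inv_mul_sum (hP k hk) hν d) (hw k hk)

end Congestion

lemma sum_Ico_sub_succ {M : Type*} [AddCommGroup M] (f : ℕ → M) {a b : ℕ} (hab : a ≤ b) :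
    ∑ j ∈ Ico a b, (f j - f (j + 1)) = f a - f b := by
  rw [sum_Ico_eq_sub _ hab, sum_range_sub', sum_range_sub', sub_sub_sub_cancel_left]

/-- The quantity `∑_{j=0}^{i-1} π([0,j]) / ν(j,j+1)`: the load that transporting the mass `π` of
the vertices left of `i` along the path to `i` puts on the edges, weighted by `1 / ν`. -/
noncomputable def leftCongestion (π ν : ℕ → ℝ) (i : ℕ) : ℝ :=
  ∑ j ∈ range i, (∑ k ∈ range (j + 1), π k) / ν j

/-- The quantity `∑_{j=i+1}^{n} π([j,n]) / ν(j-1,j)`: the analogue of `leftCongestion` for the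
vertices right of `i` in the path `{0,…,n}`. The edge `{j-1,j}` has index `j - 1`; the subtraction
never truncates because `j ≥ 1`. -/
noncomputable def rightCongestion (n : ℕ) (π ν : ℕ → ℝ) (i : ℕ) : ℝ :=
  ∑ j ∈ Icc (i + 1) n, (∑ k ∈ Icc j n, π k) / ν (j - 1)

section Path

variable {n i : ℕ} {π ν : ℕ → ℝ}

lemma rightCongestion_eq_sum_Ico (n : ℕ) (π ν : ℕ → ℝ) (i : ℕ) :
    rightCongestion n π ν i = ∑ j ∈ Ico i n, (∑ k ∈ Icc (j + 1) n, π k) / ν j := by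
  rw [rightCongestion, ← Ico_add_one_right_eq_Icc, ← sum_Ico_add']
  simp only [Nat.add_sub_cancel]

lemma leftCongestion_zero (π ν : ℕ → ℝ) : leftCongestion π ν 0 = 0 :=
  sum_range_zero _

lemma rightCongestion_self (n : ℕ) (π ν : ℕ → ℝ) : rightCongestion n π ν n = 0 := by
  rw [rightCongestion_eq_sum_Ico, Ico_self, sum_empty]

lemma leftCongestion_pos (hi : 0 < i) (hπ : ∀ k ∈ range i, 0 < π k)
    (hν : ∀ j ∈ range i, 0 < ν j) : 0 < leftCongestion π ν i := by
  refine sum_pos (fun j hj => div_pos (sum_pos (fun k hk => hπ k ?_) ?_) (hν j hj)) ?_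
  · grind
  · exact nonempty_range_add_one
  · exact nonempty_range_iff.2 hi.ne'

lemma rightCongestion_pos (hi : i < n) (hπ : ∀ k ∈ Icc (i + 1) n, 0 < π k)
    (hν : ∀ j ∈ Ico i n, 0 < ν j) : 0 < rightCongestion n π ν i := by
  rw [rightCongestion_eq_sum_Ico]
  refine sum_pos (fun j hj => div_pos (sum_pos (fun k hk => hπ k ?_) ?_) (hν j hj)) ?_
  · grind
  · exact nonempty_Icc.2 (mem_Ico.1 hj).2
  · exact nonempty_Ico.2 hi

lemma sum_range_sq_sub_mul_le_leftCongestion_mul (hπ : ∀ k ∈ range i, 0 ≤ π k)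
    (hν : ∀ j ∈ range i, 0 < ν j) (f : ℕ → ℝ) :
    ∑ k ∈ range i, (f k - f i) ^ 2 * π k ≤
      leftCongestion π ν i * ∑ j ∈ range i, (f j - f (j + 1)) ^ 2 * ν j := by
  have hload : ∀ j ∈ range i, {k ∈ range i | j ∈ Ico k i} = range (j + 1) := by
    intro j hj
    ext k
    simp only [mem_filter, mem_Ico, mem_range] at hj ⊢
    omega
  calc ∑ k ∈ range i, (f k - f i) ^ 2 * π k
      = ∑ k ∈ range i, (∑ j ∈ Ico k i, (f j - f (j + 1))) ^ 2 * π k :=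
        sum_congr rfl fun k hk => by rw [sum_Ico_sub_succ f (mem_range.1 hk).le]
    _ ≤ (∑ j ∈ range i, (∑ k ∈ range i with j ∈ Ico k i, π k) / ν j) *
          ∑ j ∈ range i, (f j - f (j + 1)) ^ 2 * ν j :=
        sum_sq_sum_mul_le
          (fun k _ => range_eq_Ico i ▸ Ico_subset_Ico_left k.zero_le) hπ hν _
    _ = leftCongestion π ν i * ∑ j ∈ range i, (f j - f (j + 1)) ^ 2 * ν j := by
        rw [leftCongestion, sum_congr rfl fun j hj => by rw [hload j hj]]

lemma sum_Icc_sq_sub_mul_le_rightCongestion_mul (hπ : ∀ k ∈ Icc (i + 1) n, 0 ≤ π k)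
    (hν : ∀ j ∈ Ico i n, 0 < ν j) (f : ℕ → ℝ) :
    ∑ k ∈ Icc (i + 1) n, (f k - f i) ^ 2 * π k ≤
      rightCongestion n π ν i * ∑ j ∈ Ico i n, (f j - f (j + 1)) ^ 2 * ν j := by
  have hload : ∀ j ∈ Ico i n, {k ∈ Icc (i + 1) n | j ∈ Ico i k} = Icc (j + 1) n := by
    intro j hj
    ext k
    simp only [mem_filter, mem_Ico, mem_Icc] at hj ⊢
    omega
  calc ∑ k ∈ Icc (i + 1) n, (f k - f i) ^ 2 * π k
      = ∑ k ∈ Icc (i + 1) n, (∑ j ∈ Ico i k, (f j - f (j + 1))) ^ 2 * π k :=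
        sum_congr rfl fun k hk => by
          rw [sum_Ico_sub_succ f (Nat.le_of_succ_le (mem_Icc.1 hk).1), sub_sq_comm]
    _ ≤ (∑ j ∈ Ico i n, (∑ k ∈ Icc (i + 1) n with j ∈ Ico i k, π k) / ν j) *
          ∑ j ∈ Ico i n, (f j - f (j + 1)) ^ 2 * ν j :=
        sum_sq_sum_mul_le (fun k hk => Ico_subset_Ico_right (mem_Icc.1 hk).2) hπ hν _
    _ = rightCongestion n π ν i * ∑ j ∈ Ico i n, (f j - f (j + 1)) ^ 2 * ν j := by
        rw [rightCongestion_eq_sum_Ico, sum_congr rfl fun j hj => by rw [hload j hj]]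

lemma EForm_self_eq_add (hi : i ≤ n) (ν f : ℕ → ℝ) :
    EForm n ν f f = ∑ j ∈ range i, (f j - f (j + 1)) ^ 2 * ν j +
      ∑ j ∈ Ico i n, (f j - f (j + 1)) ^ 2 * ν j := by
  simp only [EForm, sum_range_add_sum_Ico _ hi, sq]

lemma sum_sq_sub_mul_eq_varPi_add_sq (hπ1 : ∑ k ∈ range (n + 1), π k = 1) (f : ℕ → ℝ) (c : ℝ) :
    ∑ k ∈ range (n + 1), (f k - c) ^ 2 * π k = varPi n π f + (piMean n π f - c) ^ 2 := by
  have hexpand : ∑ k ∈ range (n + 1), (f k - c) ^ 2 * π k =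
      piMean n π (fun k => f k ^ 2) - 2 * c * piMean n π f + c ^ 2 * ∑ k ∈ range (n + 1), π k := by
    simp only [piMean, mul_sum, ← sum_sub_distrib, ← sum_add_distrib]
    exact sum_congr rfl fun k _ => by ring
  rw [hexpand, hπ1, varPi]
  ring

lemma varPi_eq_sum_sq_sub_piMean_mul (hπ1 : ∑ k ∈ range (n + 1), π k = 1) (f : ℕ → ℝ) :
    varPi n π f = ∑ k ∈ range (n + 1), (f k - piMean n π f) ^ 2 * π k := by
  rw [sum_sq_sub_mul_eq_varPi_add_sq hπ1, sub_self, zero_pow two_ne_zero, add_zero]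

lemma varPi_le_sum_sq_sub_mul (hπ1 : ∑ k ∈ range (n + 1), π k = 1) (f : ℕ → ℝ) (c : ℝ) :
    varPi n π f ≤ ∑ k ∈ range (n + 1), (f k - c) ^ 2 * π k := by
  rw [sum_sq_sub_mul_eq_varPi_add_sq hπ1]
  exact le_add_of_nonneg_right (sq_nonneg _)

lemma Nonconstant.exists_ne {f : ℕ → ℝ} (hf : Nonconstant n f) (c : ℝ) :
    ∃ k ∈ range (n + 1), f k ≠ c := by
  obtain ⟨a, ha, b, hb, hab⟩ := hf
  by_contra! hconst
  exact hab ((hconst a ha).trans (hconst b hb).symm)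

lemma Nonconstant.varPi_pos {f : ℕ → ℝ} (hf : Nonconstant n f)
    (hπ : ∀ k ∈ range (n + 1), 0 < π k) (hπ1 : ∑ k ∈ range (n + 1), π k = 1) :
    0 < varPi n π f := by
  rw [varPi_eq_sum_sq_sub_piMean_mul hπ1]
  obtain ⟨k, hk, hne⟩ := hf.exists_ne (piMean n π f)
  exact sum_pos' (fun j hj => mul_nonneg (sq_nonneg _) (hπ j hj).le)
    ⟨k, hk, mul_pos (sq_pos_of_ne_zero (sub_ne_zero.2 hne)) (hπ k hk)⟩

lemma varPi_le_congestion_mul_add (hi : i ≤ n) (hπ : ∀ k ∈ range (n + 1), 0 ≤ π k)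
    (hπ1 : ∑ k ∈ range (n + 1), π k = 1) (hν : ∀ j ∈ range n, 0 < ν j) (f : ℕ → ℝ) :
    varPi n π f ≤
      leftCongestion π ν i * ∑ j ∈ range i, (f j - f (j + 1)) ^ 2 * ν j +
        rightCongestion n π ν i * ∑ j ∈ Ico i n, (f j - f (j + 1)) ^ 2 * ν j :=
  calc varPi n π f
      ≤ ∑ k ∈ range (n + 1), (f k - f i) ^ 2 * π k := varPi_le_sum_sq_sub_mul hπ1 f (f i)
    _ = ∑ k ∈ range i, (f k - f i) ^ 2 * π k + ∑ k ∈ Icc (i + 1) n, (f k - f i) ^ 2 * π k := by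
        rw [← sum_range_add_sum_Ico _ (Nat.add_le_add_right hi 1), sum_range_succ,
          Ico_add_one_right_eq_Icc, sub_self, zero_pow two_ne_zero, zero_mul, add_zero]
    _ ≤ _ := add_le_add
        (sum_range_sq_sub_mul_le_leftCongestion_mul (fun k hk => hπ k (by grind))
          (fun j hj => hν j (by grind)) f)
        (sum_Icc_sq_sub_mul_le_rightCongestion_mul (fun k hk => hπ k (by grind))
          (fun j hj => hν j (by grind)) f)

lemma varPi_le_max_congestion_mul_EForm (hi : i ≤ n) (hπ : ∀ k ∈ range (n + 1), 0 ≤ π k)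
    (hπ1 : ∑ k ∈ range (n + 1), π k = 1) (hν : ∀ j ∈ range n, 0 < ν j) (f : ℕ → ℝ) :
    varPi n π f ≤ max (leftCongestion π ν i) (rightCongestion n π ν i) * EForm n ν f f := by
  have henergy : ∀ j ∈ range n, 0 ≤ (f j - f (j + 1)) ^ 2 * ν j := fun j hj =>
    mul_nonneg (sq_nonneg _) (hν j hj).le
  refine (varPi_le_congestion_mul_add hi hπ hπ1 hν f).trans ?_
  rw [EForm_self_eq_add hi, mul_add]
  exact add_le_add
    (mul_le_mul_of_nonneg_right (le_max_left _ _) (sum_nonneg fun j hj => henergy j (by grind)))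
    (mul_le_mul_of_nonneg_right (le_max_right _ _) (sum_nonneg fun j hj => henergy j (by grind)))

lemma IsSpectralGap.inv_le {gap C : ℝ} (hgap : IsSpectralGap n π ν gap)
    (hπ : ∀ k ∈ range (n + 1), 0 < π k) (hπ1 : ∑ k ∈ range (n + 1), π k = 1) (hC : 0 < C)
    (hpoincare : ∀ f, varPi n π f ≤ C * EForm n ν f f) : C⁻¹ ≤ gap := by
  obtain ⟨f, hf, rfl⟩ := hgap.1
  rw [le_div_iff₀ (hf.varPi_pos hπ hπ1), inv_mul_le_iff₀ hC]
  exact hpoincare f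

end Path

theorem stmt15 (n : ℕ) (hn : 1 ≤ n) (π ν : ℕ → ℝ)
    (hπ : ∀ i ∈ Finset.range (n + 1), 0 < π i)
    (hπ1 : ∑ i ∈ Finset.range (n + 1), π i = 1)
    (hν : ∀ i ∈ Finset.range n, 0 < ν i)
    (gap : ℝ) (hgap : IsSpectralGap n π ν gap) :
    -- `gap ≥ max_i min{A i⁻¹, B i⁻¹}` where
    -- `A i = Σ_{j=0}^{i−1} π([0,j])/ν(j,j+1)`, `B i = Σ_{j=i+1}^n π([j,n])/ν(j−1,j)`,
    -- and `0⁻¹ = ∞`, so that at `i = 0` only `B`, and at `i = n` only `A`, constrains.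
    ∀ i ≤ n,
      (i = 0 →
        (∑ j ∈ Finset.Icc 1 n, (∑ k ∈ Finset.Icc j n, π k) / ν (j - 1))⁻¹ ≤ gap) ∧
      (i = n →
        (∑ j ∈ Finset.range n, (∑ k ∈ Finset.range (j + 1), π k) / ν j)⁻¹ ≤ gap) ∧
      (0 < i → i < n →
        min (∑ j ∈ Finset.range i, (∑ k ∈ Finset.range (j + 1), π k) / ν j)⁻¹
            (∑ j ∈ Finset.Icc (i + 1) n, (∑ k ∈ Finset.Icc j n, π k) / ν (j - 1))⁻¹
          ≤ gap) := by
  intro i hi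
  have hleft (h : 0 < i) : 0 < leftCongestion π ν i :=
    leftCongestion_pos h (fun k hk => hπ k (by grind)) (fun j hj => hν j (by grind))
  have hright (h : i < n) : 0 < rightCongestion n π ν i :=
    rightCongestion_pos h (fun k hk => hπ k (by grind)) (fun j hj => hν j (by grind))
  have hmax : 0 < max (leftCongestion π ν i) (rightCongestion n π ν i) :=
    lt_max_iff.2 ((show 0 < i ∨ i < n by omega).imp hleft hright)
  have hbound : (max (leftCongestion π ν i) (rightCongestion n π ν i))⁻¹ ≤ gap :=
    hgap.inv_le hπ hπ1 hmax
      (varPi_le_max_congestion_mul_EForm hi (fun k hk => (hπ k hk).le) hπ1 hν)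
  refine ⟨?_, ?_, fun _ _ => (min_inv_inv_le_inv_max _ _).trans hbound⟩
  · rintro rfl
    rwa [leftCongestion_zero, max_eq_right (hright hn).le] at hbound
  · rintro rfl
    rwa [rightCongestion_self, max_eq_left (hleft hn).le] at hbound
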